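/- The set of Gödel numbers e of partial recursive functions f : ℕ² ⇀ ℕ such that the quotient order associated to the transitive closure of dom f is finite is Σ^0_3-complete. -/

import Mathlib

open Nat.Partrec (Code)

/-- `φ_e`, the partial recursive function with Gödel number `e`; here viewed as a
function `ℕ² ⇀ ℕ` via the recursive pairing `Nat.pair`. -/
def phi (e : ℕ) : ℕ →. ℕ := (Denumerable.ofNat Code e).eval

/-- The domain of `φ_e`, viewed as a binary relation on `ℕ`. -/
def domRel (e : ℕ) (x y : ℕ) : Prop := (phi e (Nat.pair x y)).Dom

/-- `A` is `Σ⁰₂` : `A = {x : ∃y ∀z R(x,y,z)}` for some recursive relation `R`. -/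
def IsSigma2 (A : Set ℕ) : Prop :=
  ∃ r : ℕ → ℕ → ℕ → Bool, Computable (fun x : ℕ × ℕ × ℕ => r x.1 x.2.1 x.2.2) ∧
    ∀ x : ℕ, x ∈ A ↔ ∃ y : ℕ, ∀ z : ℕ, r x y z = true

/-- `A` is `Π⁰₂` : the complement of `A` is `Σ⁰₂`. -/
def IsPi2 (A : Set ℕ) : Prop := IsSigma2 Aᶜ

/-- `A` is `Σ⁰₃` : `A = {x : ∃y ∀z ∃w R(x,y,z,w)}` for some recursive relation `R`. -/
def IsSigma3 (A : Set ℕ) : Prop :=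
  ∃ r : ℕ → ℕ → ℕ → ℕ → Bool,
    Computable (fun x : ℕ × ℕ × ℕ × ℕ => r x.1 x.2.1 x.2.2.1 x.2.2.2) ∧
    ∀ x : ℕ, x ∈ A ↔ ∃ y : ℕ, ∀ z : ℕ, ∃ w : ℕ, r x y z w = true

/-- `A` is `Π⁰₂`-complete. -/
def IsPi2Complete (A : Set ℕ) : Prop :=
  IsPi2 A ∧ ∀ B : Set ℕ, IsPi2 B → ManyOneReducible (· ∈ B) (· ∈ A)

def IsSigma2Complete (A : Set ℕ) : Prop :=
  IsSigma2 A ∧ ∀ B : Set ℕ, IsSigma2 B → ManyOneReducible (· ∈ B) (· ∈ A)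

def IsSigma3Complete (A : Set ℕ) : Prop :=
  IsSigma3 A ∧ ∀ B : Set ℕ, IsSigma3 B → ManyOneReducible (· ∈ B) (· ∈ A)

/-- The field of a binary relation on `ℕ`: the integers occurring in related pairs. -/
def FldR (r : ℕ → ℕ → Prop) : Set ℕ := {x : ℕ | ∃ y : ℕ, r x y ∨ r y x}

/-- The preorder generated by `r` : its reflexive–transitive closure. -/
def PreR (r : ℕ → ℕ → Prop) : ℕ → ℕ → Prop := Relation.ReflTransGen r

/-- The equivalence classes of the quotient of the preorder generated by `r`
(on the field of `r`) by the equivalence `x ∼ y ↔ x ⪯ y ∧ y ⪯ x`. -/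
def ClassesR (r : ℕ → ℕ → Prop) : Set (Set ℕ) :=
  {S : Set ℕ | ∃ x ∈ FldR r, S = {y ∈ FldR r | PreR r x y ∧ PreR r y x}}

/-- The quotient order associated to `r` is a finite linear order with exactly
`n` elements. -/
def QuotLinCard (r : ℕ → ℕ → Prop) (n : ℕ) : Prop :=
  (∀ x ∈ FldR r, ∀ y ∈ FldR r, PreR r x y ∨ PreR r y x) ∧
    (ClassesR r).Finite ∧ (ClassesR r).ncard = n

theorem aux_forall_lt {α : Type*} [Primcodable α] {f : α → ℕ} {p : α → ℕ → Prop}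
    (hf : Primrec f) (hp : PrimrecPred fun q : α × ℕ => p q.1 q.2) :
    PrimrecPred fun a => ∀ z < f a, p a z := by
  have h1 : PrimrecRel fun (z : ℕ) (a : α) => p a z :=
    PrimrecPred.comp hp (Primrec.snd.pair Primrec.fst)
  have h2 := h1.forall_mem_list.comp (Primrec.list_range.comp hf) Primrec.id
  exact h2.of_eq (by simp)

def evS (e k n : ℕ) : Prop := (Code.evaln k (Denumerable.ofNat Code e) n).isSome = true

theorem evS_mono {e k k' n : ℕ} (h : k ≤ k') (h1 : evS e k n) : evS e k' n := by
  unfold evS at *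
  rw [Option.isSome_iff_exists] at *
  obtain ⟨a, ha⟩ := h1
  exact ⟨a, Code.evaln_mono h ha⟩

theorem phi_dom_iff (e n : ℕ) : (phi e n).Dom ↔ ∃ k, evS e k n := by
  unfold phi evS
  rw [Part.dom_iff_mem]
  simp only [Code.evaln_complete, Option.isSome_iff_exists]
  exact exists_comm

theorem evS_prim {α : Type*} [Primcodable α] {e k n : α → ℕ} (he : Primrec e) (hk : Primrec k)
    (hn : Primrec n) : PrimrecPred fun a => evS (e a) (k a) (n a) := by
  have h : Primrec fun a => (Code.evaln (k a) (Denumerable.ofNat Code (e a)) (n a)).isSome :=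
    Primrec.option_isSome.comp
      (Code.primrec_evaln.comp ((hk.pair ((Primrec.ofNat Code).comp he)).pair hn))
  exact Primrec.eq.comp h (Primrec.const true)

theorem isSigma3_of {A : Set ℕ} {Z W : Type} [Primcodable Z] [Primcodable W] [Inhabited Z]
    [Inhabited W] (p : ℕ → ℕ → Z → W → Prop)
    (hp : PrimrecPred fun q : ℕ × ℕ × Z × W => p q.1 q.2.1 q.2.2.1 q.2.2.2)
    (h : ∀ x, x ∈ A ↔ ∃ y, ∀ z, ∃ w, p x y z w) : IsSigma3 A := by
  classical
  refine ⟨fun x y z w => decide (p x y ((Encodable.decode (α := Z) z).getD default)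
    ((Encodable.decode (α := W) w).getD default)), ?_, ?_⟩
  · have hZ : Primrec fun z : ℕ => (Encodable.decode (α := Z) z).getD default :=
      Primrec.option_getD.comp Primrec.decode (Primrec.const _)
    have hW : Primrec fun z : ℕ => (Encodable.decode (α := W) z).getD default :=
      Primrec.option_getD.comp Primrec.decode (Primrec.const _)
    have : Primrec fun q : ℕ × ℕ × ℕ × ℕ => (q.1, q.2.1,
        (Encodable.decode (α := Z) q.2.2.1).getD default,
        (Encodable.decode (α := W) q.2.2.2).getD default) :=
      Primrec.fst.pair ((Primrec.fst.comp Primrec.snd).pair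
        ((hZ.comp (Primrec.fst.comp (Primrec.snd.comp Primrec.snd))).pair
          (hW.comp (Primrec.snd.comp (Primrec.snd.comp Primrec.snd)))))
    exact ((hp.comp this).decide).to_comp
  · intro x
    rw [h]
    refine exists_congr fun y => ⟨fun H z => ?_, fun H z => ?_⟩
    · obtain ⟨w, hw⟩ := H ((Encodable.decode (α := Z) z).getD default)
      exact ⟨Encodable.encode w, by simpa using hw⟩
    · obtain ⟨w, hw⟩ := H (Encodable.encode z)
      exact ⟨_, by simpa using hw⟩

def pathP (e k : ℕ) (q : ℕ × List ℕ) (x y : ℕ) : Prop :=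
  q.2.getI 0 = x ∧ q.2.getI q.1 = y ∧
    ∀ i < q.1, evS e k (Nat.pair (q.2.getI i) (q.2.getI (i + 1)))

theorem pathP_mono {e k k' : ℕ} {q x y} (h : k ≤ k') (h1 : pathP e k q x y) : pathP e k' q x y :=
  ⟨h1.1, h1.2.1, fun i hi => evS_mono h (h1.2.2 i hi)⟩

theorem pathP_prim {α : Type*} [Primcodable α] {e k x y : α → ℕ} {q : α → ℕ × List ℕ}
    (he : Primrec e) (hk : Primrec k) (hq : Primrec q) (hx : Primrec x) (hy : Primrec y) :
    PrimrecPred fun a => pathP (e a) (k a) (q a) (x a) (y a) := by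
  have hl : Primrec fun a => (q a).2 := Primrec.snd.comp hq
  have hn : Primrec fun a => (q a).1 := Primrec.fst.comp hq
  refine (Primrec.eq.comp (Primrec.list_getI.comp hl (Primrec.const 0)) hx).and
    ((Primrec.eq.comp (Primrec.list_getI.comp hl hn) hy).and ?_)
  refine aux_forall_lt hn ?_
  refine evS_prim (he.comp Primrec.fst) (hk.comp Primrec.fst) ?_
  exact Primrec₂.natPair.comp
    (Primrec.list_getI.comp (hl.comp Primrec.fst) Primrec.snd)
    (Primrec.list_getI.comp (hl.comp Primrec.fst) (Primrec.succ.comp Primrec.snd))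

theorem preR_iff (e x y : ℕ) : PreR (domRel e) x y ↔ ∃ k q, pathP e k q x y := by
  constructor
  · intro h
    induction h using Relation.ReflTransGen.head_induction_on with
    | refl => exact ⟨0, (0, [y]), by simp [pathP]⟩
    | @head a c hac _ ih =>
      obtain ⟨k, ⟨n, l⟩, h0, h1, h2⟩ := ih
      obtain ⟨k', hk'⟩ := (phi_dom_iff _ _).1 hac
      refine ⟨max k k', (n + 1, a :: l), by simp, by simpa using h1, ?_⟩
      rintro (_ | i) hi
      · simp only at h0
        simpa [h0] using evS_mono (le_max_right k k') hk'
      · simpa using evS_mono (le_max_left k k') (h2 i (by simpa using hi))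
  · rintro ⟨k, ⟨n, l⟩, h0, h1, h2⟩
    simp only at h0 h1 h2
    subst h0 h1
    induction n with
    | zero => exact Relation.ReflTransGen.refl
    | succ n ih =>
      exact Relation.ReflTransGen.tail (ih fun i hi => h2 i (by omega))
        ((phi_dom_iff _ _).2 ⟨k, h2 n (by omega)⟩)

theorem finite_iff (r : ℕ → ℕ → Prop) : (ClassesR r).Finite ↔
    ∃ N, ∀ x ∈ FldR r, ∃ y ≤ N, PreR r x y ∧ PreR r y x := by
  constructor
  · intro h
    obtain ⟨N, hN⟩ := (h.image sInf).bddAbove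
    refine ⟨N, fun x hx => ?_⟩
    have hne : ({y ∈ FldR r | PreR r x y ∧ PreR r y x} : Set ℕ).Nonempty :=
      ⟨x, hx, Relation.ReflTransGen.refl, Relation.ReflTransGen.refl⟩
    exact ⟨_, hN ⟨_, ⟨x, hx, rfl⟩, rfl⟩, (Nat.sInf_mem hne).2⟩
  · rintro ⟨N, hN⟩
    refine ((Set.finite_Iic N).image
      fun x => ({y ∈ FldR r | PreR r x y ∧ PreR r y x} : Set ℕ)).subset ?_
    rintro S ⟨x, hx, rfl⟩
    obtain ⟨y, hy, h1, h2⟩ := hN x hx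
    refine ⟨y, hy, ?_⟩
    ext z
    constructor
    · rintro ⟨hz, h3, h4⟩
      exact ⟨hz, h1.trans h3, h4.trans h2⟩
    · rintro ⟨hz, h3, h4⟩
      exact ⟨hz, h2.trans h3, h4.trans h1⟩

theorem mem_part : IsSigma3 {e : ℕ | (ClassesR (domRel e)).Finite} := by
  refine isSigma3_of (Z := ℕ × ℕ × ℕ) (W := (ℕ × ℕ) × (ℕ × List ℕ) × (ℕ × List ℕ))
    (fun e N z w => ¬ (evS e z.1 (Nat.pair z.2.1 z.2.2) ∨ evS e z.1 (Nat.pair z.2.2 z.2.1)) ∨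
      (w.1.1 ≤ N ∧ pathP e w.1.2 w.2.1 z.2.1 w.1.1 ∧ pathP e w.1.2 w.2.2 w.1.1 z.2.1)) ?_ ?_
  · have e := Primrec.fst (α := ℕ) (β := ℕ × (ℕ × ℕ × ℕ) × (ℕ × ℕ) × (ℕ × List ℕ) × (ℕ × List ℕ))
    have s := Primrec.snd (α := ℕ) (β := ℕ × (ℕ × ℕ × ℕ) × (ℕ × ℕ) × (ℕ × List ℕ) × (ℕ × List ℕ))
    have N := Primrec.fst.comp s
    have s2 := Primrec.snd.comp s
    have z := Primrec.fst.comp s2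
    have w := Primrec.snd.comp s2
    have k := Primrec.fst.comp z
    have x := Primrec.fst.comp (Primrec.snd.comp z)
    have x' := Primrec.snd.comp (Primrec.snd.comp z)
    have y := Primrec.fst.comp (Primrec.fst.comp w)
    have k' := Primrec.snd.comp (Primrec.fst.comp w)
    have q := Primrec.fst.comp (Primrec.snd.comp w)
    have q' := Primrec.snd.comp (Primrec.snd.comp w)
    exact (((evS_prim e k (Primrec₂.natPair.comp x x')).or
      (evS_prim e k (Primrec₂.natPair.comp x' x))).not).or
      ((Primrec.nat_le.comp y N).and ((pathP_prim e k' q x y).and (pathP_prim e k' q' y x)))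
  · intro e
    change (ClassesR (domRel e)).Finite ↔ _
    rw [finite_iff]
    refine exists_congr fun N => ⟨fun H z => ?_, fun H x hx => ?_⟩
    · by_cases hz : evS e z.1 (Nat.pair z.2.1 z.2.2) ∨ evS e z.1 (Nat.pair z.2.2 z.2.1)
      · obtain ⟨y, hy, h1, h2⟩ := H z.2.1 ⟨z.2.2, by
          simp only [domRel, phi_dom_iff]
          exact hz.imp (fun h => ⟨_, h⟩) fun h => ⟨_, h⟩⟩
        obtain ⟨k1, q1, h1⟩ := (preR_iff _ _ _).1 h1
        obtain ⟨k2, q2, h2⟩ := (preR_iff _ _ _).1 h2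
        exact ⟨((y, max k1 k2), q1, q2), Or.inr ⟨hy, pathP_mono (le_max_left _ _) h1,
          pathP_mono (le_max_right _ _) h2⟩⟩
      · exact ⟨default, Or.inl hz⟩
    · obtain ⟨x', hx'⟩ := hx
      simp only [domRel, phi_dom_iff] at hx'
      obtain ⟨k, hk⟩ : ∃ k, evS e k (Nat.pair x x') ∨ evS e k (Nat.pair x' x) := by
        rcases hx' with ⟨k, h⟩ | ⟨k, h⟩
        · exact ⟨k, Or.inl h⟩
        · exact ⟨k, Or.inr h⟩
      obtain ⟨w, hw | ⟨hw, h1, h2⟩⟩ := H (k, x, x')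
      · exact absurd hk hw
      · exact ⟨_, hw, (preR_iff _ _ _).2 ⟨_, _, h1⟩, (preR_iff _ _ _).2 ⟨_, _, h2⟩⟩

/-- Domain of a search. -/
theorem exists_index {α : Type*} [Primcodable α] {p : α → ℕ → Bool}
    (hp : Computable fun q : α × ℕ => p q.1 q.2) :
    ∃ e : ℕ, ∀ a, (phi e (Encodable.encode a)).Dom ↔ ∃ w, p a w = true := by
  have h : Partrec fun a : α => Nat.rfind fun n => Part.some (p a n) :=
    Partrec.rfind (p := fun a n => Part.some (p a n)) hp.partrec
  obtain ⟨c, hc⟩ := Code.exists_code.1 h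
  refine ⟨Encodable.encode c, fun a => ?_⟩
  simp only [phi, Denumerable.ofNat_encode, hc, Encodable.encodek, Part.coe_some, Part.bind_some,
    Part.map_Dom]
  exact Nat.rfind_dom.trans (by simp)

def Qd (G : ℕ → ℕ → Prop) (y n : ℕ) : Prop := ∃ y' ≤ y, ∀ z < n, G y' z

def Dd (G : ℕ → ℕ → Prop) (a b : ℕ) : Prop :=
  (a = b ∨ a = 0 ∨ b = 0) ∧ Qd G (Nat.unpair (max a b - 1)).1
    ((Nat.unpair (max a b - 1)).2 + if a = b then 0 else 1)

theorem Qd_anti {G : ℕ → ℕ → Prop} {y n m : ℕ} (h : m ≤ n) (h1 : Qd G y n) : Qd G y m := by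
  obtain ⟨y', hy', h1⟩ := h1
  exact ⟨y', hy', fun z hz => h1 z (by omega)⟩

theorem comb (G : ℕ → ℕ → Prop) : (ClassesR (Dd G)).Finite ↔ ∃ y, ∀ z, G y z := by
  rw [finite_iff]
  constructor
  · rintro ⟨N, hN⟩
    by_contra hB
    push Not at hB
    choose b hb using hB
    have hex : ∃ n, ¬ Qd G N n := by
      refine ⟨(Finset.range (N + 1)).sup b + 1, ?_⟩
      rintro ⟨y', hy', h⟩
      refine hb y' (h _ (Nat.lt_succ_of_le (Finset.le_sup (f := b) ?_)))
      simp; omega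
    classical
    obtain ⟨m, hm1, hm2⟩ : ∃ m, Qd G N m ∧ ¬ Qd G N (m + 1) := by
      by_contra hc
      push Not at hc
      obtain ⟨n, hn⟩ := hex
      apply hn
      clear hn
      induction n with
      | zero => exact ⟨0, by omega, by simp⟩
      | succ n ih => exact hc n ih
    have hstep : ∀ c, Dd G (Nat.pair N m + 1) c → c = Nat.pair N m + 1 := by
      rintro c ⟨h | h | h, h'⟩
      · exact h.symm
      · omega
      · subst h
        simp at h'
        exact absurd h' hm2
    obtain ⟨y, hy, h1, -⟩ := hN (Nat.pair N m + 1)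
      ⟨Nat.pair N m + 1, Or.inl ⟨Or.inl rfl, by simpa using hm1⟩⟩
    have : y = Nat.pair N m + 1 := by
      clear hy
      unfold PreR at h1
      induction h1 with
      | refl => rfl
      | tail _ h ih => subst ih; exact hstep _ h
    have := Nat.left_le_pair N m
    omega
  · rintro ⟨y0, hy0⟩
    have hch : ∀ y, ∃ n, (∀ m, Qd G y m) ∨ ¬ Qd G y n := by
      intro y
      by_cases h : ∀ m, Qd G y m
      · exact ⟨0, Or.inl h⟩
      · push Not at h
        exact h.imp fun _ h => Or.inr h
    choose n hn using hch
    refine ⟨(Finset.range y0).sup fun y => Nat.pair y (n y) + 1, fun x hx => ?_⟩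
    rcases Nat.eq_zero_or_pos x with rfl | hpos
    · exact ⟨0, Nat.zero_le _, Relation.ReflTransGen.refl, Relation.ReflTransGen.refl⟩
    obtain ⟨y, m, rfl⟩ : ∃ y m, x = Nat.pair y m + 1 :=
      ⟨(Nat.unpair (x - 1)).1, (Nat.unpair (x - 1)).2, by simp; omega⟩
    have hQ : Qd G y m := by
      obtain ⟨c, ⟨h | h | h, h'⟩ | ⟨h | h | h, h'⟩⟩ := hx
      · subst h; simpa using h'
      · omega
      · subst h; simp at h'; exact Qd_anti (Nat.le_succ _) h'
      · subst h; simpa using h'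
      · subst h; simp at h'; exact Qd_anti (Nat.le_succ _) h'
      · omega
    by_cases hall : ∀ m, Qd G y m
    · refine ⟨0, Nat.zero_le _, Relation.ReflTransGen.single ⟨by simp, ?_⟩,
        Relation.ReflTransGen.single ⟨by simp, ?_⟩⟩
      · simpa using hall _
      · simpa using hall _
    · have hyy : y < y0 := by
        by_contra hge
        exact hall fun m => ⟨y0, by omega, fun z _ => hy0 z⟩
      have hny := (hn y).resolve_left hall
      have hmn : m < n y := by
        by_contra hge
        exact hny (Qd_anti (by omega) hQ)
      refine ⟨_, ?_, Relation.ReflTransGen.refl, Relation.ReflTransGen.refl⟩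
      refine le_trans ?_ (Finset.le_sup (f := fun y => Nat.pair y (n y) + 1)
        (Finset.mem_range.2 hyy))
      have := Nat.pair_lt_pair_right y hmn
      omega

theorem unif {P : ℕ → ℕ → Prop} (hmono : ∀ z k k', k ≤ k' → P z k → P z k') (n : ℕ) :
    (∀ z < n, ∃ k, P z k) ↔ ∃ k, ∀ z < n, P z k := by
  refine ⟨fun h => ?_, fun ⟨k, h⟩ z hz => ⟨k, h z hz⟩⟩
  induction n with
  | zero => exact ⟨0, by simp⟩
  | succ n ih =>
    obtain ⟨k, hk⟩ := ih fun z hz => h z (by omega)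
    obtain ⟨k', hk'⟩ := h n (by omega)
    refine ⟨max k k', fun z hz => ?_⟩
    rcases Nat.lt_succ_iff_lt_or_eq.1 hz with h1 | rfl
    · exact hmono _ _ _ (le_max_left _ _) (hk z h1)
    · exact hmono _ _ _ (le_max_right _ _) hk'

def MdP (e0 x a b v : ℕ) : Prop :=
  (a = b ∨ a = 0 ∨ b = 0) ∧ v.unpair.1 ≤ (Nat.unpair (max a b - 1)).1 ∧
    ∀ z < (Nat.unpair (max a b - 1)).2 + (if a = b then 0 else 1),
      evS e0 v.unpair.2 (Encodable.encode (x, v.unpair.1, z))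

theorem MdP_prim (e0 : ℕ) : PrimrecPred fun q : ℕ × ℕ =>
    MdP e0 q.1.unpair.1 q.1.unpair.2.unpair.1 q.1.unpair.2.unpair.2 q.2 := by
  classical
  have s : Primrec fun q : ℕ × ℕ => q.1.unpair := Primrec.unpair.comp Primrec.fst
  have x := Primrec.fst.comp s
  have s2 := Primrec.unpair.comp (Primrec.snd.comp s)
  have a := Primrec.fst.comp s2
  have b := Primrec.snd.comp s2
  have v : Primrec fun q : ℕ × ℕ => q.2.unpair := Primrec.unpair.comp Primrec.snd
  have y := Primrec.fst.comp v
  have k := Primrec.snd.comp v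
  have u := Primrec.unpair.comp
    (Primrec.nat_sub.comp (Primrec.nat_max.comp a b) (Primrec.const 1))
  have hab := Primrec.eq.comp a b
  refine (hab.or ((Primrec.eq.comp a (Primrec.const 0)).or
    (Primrec.eq.comp b (Primrec.const 0)))).and
    ((Primrec.nat_le.comp y (Primrec.fst.comp u)).and ?_)
  refine aux_forall_lt (Primrec.nat_add.comp (Primrec.snd.comp u)
    (Primrec.ite hab (Primrec.const 0) (Primrec.const 1))) ?_
  exact evS_prim (Primrec.const e0) (k.comp Primrec.fst)
    (Primrec.encode.comp ((x.comp Primrec.fst).pair ((y.comp Primrec.fst).pair Primrec.snd)))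

theorem reassoc0 : Primrec fun q : (ℕ × ℕ × ℕ) × ℕ => (q.1.1, q.1.2.1, q.1.2.2, q.2) :=
  (Primrec.fst.comp Primrec.fst).pair
    ((Primrec.fst.comp (Primrec.snd.comp Primrec.fst)).pair
      ((Primrec.snd.comp (Primrec.snd.comp Primrec.fst)).pair Primrec.snd))

theorem reassoc1 : Computable fun q : (ℕ × ℕ × ℕ) × ℕ => (q.1.1, q.1.2.1, q.1.2.2, q.2) :=
  reassoc0.to_comp

theorem reassoc2 (r : ℕ × ℕ × ℕ × ℕ → Bool) (hr : Computable r) :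
    Computable fun q : (ℕ × ℕ × ℕ) × ℕ => r (q.1.1, q.1.2.1, q.1.2.2, q.2) :=
  Computable.comp (f := r) hr reassoc1

theorem hard1 (r : ℕ → ℕ → ℕ → ℕ → Bool)
    (hr : Computable (fun x : ℕ × ℕ × ℕ × ℕ => r x.1 x.2.1 x.2.2.1 x.2.2.2)) :
    ∃ e0 : ℕ, ∀ a : ℕ × ℕ × ℕ, (phi e0 (Encodable.encode a)).Dom ↔
      ∃ w, r a.1 a.2.1 a.2.2 w = true := by
  have h2 := reassoc2 _ hr
  obtain ⟨e, he⟩ := exists_index (α := ℕ × ℕ × ℕ) (p := fun a w => r a.1 a.2.1 a.2.2 w) h2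
  exact ⟨e, he⟩

theorem hard2 (e0 : ℕ) : ∃ e1 : ℕ, ∀ x a b : ℕ,
    domRel (Encodable.encode (Code.curry (Denumerable.ofNat Code e1) x)) a b ↔
      ∃ v, MdP e0 x a b v := by
  classical
  obtain ⟨e1, he1⟩ := exists_index (α := ℕ) (p := fun s v => decide
      (MdP e0 s.unpair.1 s.unpair.2.unpair.1 s.unpair.2.unpair.2 v)) (MdP_prim e0).decide.to_comp
  refine ⟨e1, fun x a b => ?_⟩
  have := he1 (Nat.pair x (Nat.pair a b))
  simp only [Encodable.encode_nat, Nat.unpair_pair, decide_eq_true_eq] at this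
  rw [← this]
  unfold domRel phi
  rw [Denumerable.ofNat_encode, Code.eval_curry]

theorem hard_part (B : Set ℕ) (hB : IsSigma3 B) :
    ManyOneReducible (· ∈ B) (· ∈ {e : ℕ | (ClassesR (domRel e)).Finite}) := by
  classical
  obtain ⟨r, hr, hB⟩ := hB
  obtain ⟨e0, he0⟩ := hard1 r hr
  let G : ℕ → ℕ → ℕ → Prop := fun x y z => ∃ w, r x y z w = true
  have hG : ∀ x y z, G x y z ↔ ∃ k, evS e0 k (Encodable.encode (x, y, z)) := fun x y z => by
    rw [← phi_dom_iff, he0]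
  have hMD : ∀ x a b, (∃ v, MdP e0 x a b v) ↔ Dd (G x) a b := by
    intro x a b
    simp only [MdP, Dd, Qd, hG]
    constructor
    · rintro ⟨v, h1, h2, h3⟩
      exact ⟨h1, _, h2, fun z hz => ⟨_, h3 z hz⟩⟩
    · rintro ⟨h1, y', h2, h3⟩
      rw [unif (P := fun z k => evS e0 k (Encodable.encode (x, y', z)))
        (fun z k k' h h' => evS_mono h h')] at h3
      obtain ⟨k, hk⟩ := h3
      exact ⟨Nat.pair y' k, h1, by simpa using h2, by simpa using hk⟩
  obtain ⟨e1, he1⟩ := hard2 e0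
  refine ⟨fun x => Encodable.encode (Code.curry (Denumerable.ofNat Code e1) x), ?_, fun x => ?_⟩
  · exact (Primrec.encode.comp
      (Code.primrec₂_curry.comp (Primrec.const _) Primrec.id)).to_comp
  · have : domRel (Encodable.encode (Code.curry (Denumerable.ofNat Code e1) x)) = Dd (G x) := by
      funext a b
      rw [← hMD]
      exact propext (he1 x a b)
    change x ∈ B ↔ (ClassesR (domRel _)).Finite
    rw [this, comb]
    exact hB x

/-- The set of Gödel numbers `e` such that the quotient order associated to the
transitive closure of `dom φ_e` is finite is `Σ⁰₃`-complete. -/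
theorem stmt8 :
    IsSigma3Complete {e : ℕ | (ClassesR (domRel e)).Finite} := by
  exact ⟨mem_part, hard_part⟩
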